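/- arXiv:2511.22196 — 2 statements merged into one kernel-verified Lean document; each statement's English description precedes it below -/
import Mathlib

section
/- Every graph G with maximum degree at most 3 has an optimal tree-decomposition (of width tw(G)) in which every bag B satisfies tw(G[B]) ≤ 3. -/
open SimpleGraph

/-- A (finite) tree-decomposition of a graph `G`: a nonempty finite tree `tree` on node
type `ι` with bags `bag x ⊆ V(G)` such that every edge of `G` lies in some bag and for
each vertex `v` the set of nodes whose bags contain `v` induces a nonempty connected
subtree. -/
structure TreeDecomp {V : Type*} (G : SimpleGraph V) where
  ι : Type
  fint : Fintype ι
  nonempty : Nonempty ι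
  tree : SimpleGraph ι
  isTree : tree.IsTree
  bag : ι → Finset V
  edge_mem : ∀ ⦃v w : V⦄, G.Adj v w → ∃ x, v ∈ bag x ∧ w ∈ bag x
  support_conn : ∀ v : V, (tree.induce {x : ι | v ∈ bag x}).Connected

/-- The tree-decomposition has width at most `w`. -/
def TreeDecomp.widthLE {V : Type*} {G : SimpleGraph V} (D : TreeDecomp G) (w : ℕ) : Prop :=
  ∀ x : D.ι, (D.bag x).card ≤ w + 1

/-- The treewidth of `G`: minimum width over all tree-decompositions. -/
noncomputable def treewidth {V : Type*} (G : SimpleGraph V) : ℕ :=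
  sInf {w : ℕ | ∃ D : TreeDecomp G, D.widthLE w}

/-- A tree-decomposition is normal if no bag is contained in the bag of an adjacent node. -/
def TreeDecomp.Normal {V : Type*} {G : SimpleGraph V} (D : TreeDecomp G) : Prop :=
  ∀ ⦃x y : D.ι⦄, D.tree.Adj x y → ¬ D.bag x ⊆ D.bag y

def addLeaf {ι : Type} (T : SimpleGraph ι) (x : ι) : SimpleGraph (Option ι) :=
  T.map Function.Embedding.some ⊔ edge none (some x)

lemma addLeaf_some {ι : Type} (T : SimpleGraph ι) (x a b : ι) (h : T.Adj a b) :
    (addLeaf T x).Adj (some a) (some b) := by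
  refine Or.inl ?_
  exact (map_adj_apply (f := Function.Embedding.some)).2 h

lemma addLeaf_none {ι : Type} (T : SimpleGraph ι) (x : ι) :
    (addLeaf T x).Adj (some x) none := by
  refine Or.inr ?_
  simp [edge_adj]

lemma addLeaf_conn {ι : Type} (T : SimpleGraph ι) (x : ι) (S : Set ι) (S' : Set (Option ι))
    (h : (T.induce S).Connected) (h1 : ∀ y, some y ∈ S' ↔ y ∈ S) (h2 : none ∈ S' → x ∈ S) :
    ((addLeaf T x).induce S').Connected := by
  let f : T.induce S →g (addLeaf T x).induce S' :=
    { toFun := fun y => ⟨some y.1, (h1 _).2 y.2⟩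
      map_rel' := fun {a b} hab => addLeaf_some T x a.1 b.1 hab }
  obtain ⟨s⟩ := h.nonempty
  rw [connected_iff_exists_forall_reachable]
  refine ⟨f s, ?_⟩
  rintro ⟨w, hw⟩
  cases w with
  | none =>
    have hx := h2 hw
    refine ((h.preconnected s ⟨x, hx⟩).map f).trans ?_
    refine SimpleGraph.Adj.reachable ?_
    exact addLeaf_none T x
  | some y =>
    exact (h.preconnected s ⟨y, (h1 _).1 hw⟩).map f

lemma addLeaf_isTree {ι : Type} [Finite ι] (T : SimpleGraph ι) (x : ι) (h : T.IsTree) :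
    (addLeaf T x).IsTree := by
  rw [isTree_iff_connected_and_card] at h ⊢
  obtain ⟨hc, hn⟩ := h
  constructor
  · let f : T →g addLeaf T x :=
      { toFun := fun y => some y
        map_rel' := fun {a b} hab => addLeaf_some T x a b hab }
    rw [connected_iff_exists_forall_reachable]
    refine ⟨some x, ?_⟩
    intro w
    cases w with
    | none => exact (addLeaf_none T x).reachable
    | some y => exact (hc.preconnected x y).map f
  · have he : (addLeaf T x).edgeSet =
        insert s(none, some x) (Function.Embedding.some.sym2Map '' T.edgeSet) := by
      rw [addLeaf, edgeSet_sup, edgeSet_map, edge_edgeSet_of_ne (by simp : (none : Option ι) ≠ some x)]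
      rw [Set.union_comm]; rfl
    have hni : s(none, some x) ∉ (Function.Embedding.some.sym2Map '' T.edgeSet) := by
      rintro ⟨e, -, he⟩
      induction e with
      | _ a b => simp at he
    rw [Nat.card_coe_set_eq] at hn ⊢
    rw [he, Set.ncard_insert_of_notMem hni (Set.toFinite _),
      Set.ncard_image_of_injective _ (Function.Embedding.injective _), hn]
    simp

def attach {V : Type*} [DecidableEq V] (G : SimpleGraph V) (v : V) (N : Finset V)
    (hN : ∀ u, u ∈ N ↔ G.Adj v u) (ι : Type) (fint : Fintype ι) (T : SimpleGraph ι)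
    (hT : T.IsTree) (bag : ι → Finset V)
    (he : ∀ a b, a ≠ v → b ≠ v → G.Adj a b → ∃ x, a ∈ bag x ∧ b ∈ bag x)
    (hs : ∀ u, u ≠ v → (T.induce {x | u ∈ bag x}).Connected)
    (x : ι) (hx : N ⊆ bag x) : TreeDecomp G where
  ι := Option ι
  fint := inferInstance
  nonempty := inferInstance
  tree := addLeaf T x
  isTree := addLeaf_isTree T x hT
  bag := fun y => y.elim (insert v N) (fun y => (bag y).erase v)
  edge_mem := by
    intro a b hab
    by_cases ha : a = v
    · subst ha
      exact ⟨none, by simp, by simp [hN, hab]⟩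
    by_cases hb : b = v
    · subst hb
      exact ⟨none, by simp [hN, hab.symm], by simp⟩
    obtain ⟨y, h1, h2⟩ := he a b ha hb hab
    exact ⟨some y, by simp [ha, h1], by simp [hb, h2]⟩
  support_conn := by
    intro u
    by_cases hu : u = v
    · subst hu
      rw [connected_iff_exists_forall_reachable]
      refine ⟨⟨none, by simp⟩, ?_⟩
      rintro ⟨w, hw⟩
      cases w with
      | none => exact Reachable.refl _
      | some y => simp at hw
    · refine addLeaf_conn T x _ _ (hs u hu) ?_ ?_
      · intro y; simp [hu]
      · intro h
        have : u ∈ N := by simpa [hu] using h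
        exact hx this

def trivDecomp {V : Type*} [Fintype V] (G : SimpleGraph V) : TreeDecomp G where
  ι := Unit
  fint := inferInstance
  nonempty := inferInstance
  tree := ⊥
  isTree := by
    refine ⟨?_, isAcyclic_bot⟩
    rw [connected_iff_exists_forall_reachable]
    exact ⟨(), fun w => Reachable.refl _⟩
  bag := fun _ => Finset.univ
  edge_mem := by intro v w _; exact ⟨(), by simp, by simp⟩
  support_conn := by
    intro v
    rw [connected_iff_exists_forall_reachable]
    exact ⟨⟨(), by simp⟩, fun w => Reachable.refl _⟩

open Classical in
lemma deg2 (n : ℕ) : ∀ {V : Type*} [Fintype V] (G : SimpleGraph V), Fintype.card V = n →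
    (∀ v, (Finset.univ.filter (fun u => G.Adj v u)).card ≤ 2) →
    ∃ D : TreeDecomp G, D.widthLE 3 := by
  induction n with
  | zero =>
    intro V _ G hc _
    exact ⟨trivDecomp G, fun x => by
      show (Finset.univ : Finset V).card ≤ 4
      rw [Finset.card_univ]; omega⟩
  | succ n ih =>
    intro V _ G hc hd
    have : Nonempty V := Fintype.card_pos_iff.1 (by omega)
    obtain ⟨v⟩ := this
    let G' : SimpleGraph {y : V // y ≠ v} :=
      { Adj := fun a b => a ≠ b ∧ (G.Adj a b ∨ (G.Adj v a ∧ G.Adj v b))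
        symm := ⟨fun a b h => ⟨h.1.symm, h.2.elim (fun h => Or.inl h.symm) (fun h => Or.inr h.symm)⟩⟩
        loopless := ⟨fun a h => h.1 rfl⟩ }
    have hc' : Fintype.card {y : V // y ≠ v} = n := by
      rw [Fintype.card_subtype_compl, hc]; simp
    obtain ⟨D, hD⟩ := ih G' hc' (by
      intro a
      rw [← Finset.card_map (Function.Embedding.subtype _)]
      by_cases hva : G.Adj v a
      · refine (Finset.card_le_card (t := (Finset.univ.filter (fun u => G.Adj a u)).erase v ∪
            (Finset.univ.filter (fun u => G.Adj v u)).erase a.1) ?_).trans ?_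
        · intro u hu
          simp only [Finset.mem_map, Finset.mem_filter, Finset.mem_univ, true_and] at hu
          obtain ⟨u, ⟨h1, h2⟩, rfl⟩ := hu
          have h3 : u.1 ≠ a.1 := fun h => h1 (Subtype.ext h.symm)
          rcases h2 with h2 | h2
          · simp [h2, u.2]
          · simp [h2.2, h3]
        have h1 := Finset.card_erase_of_mem (s := Finset.univ.filter (fun u => G.Adj a u)) (a := v)
          (by simp [hva.symm])
        have h2 := Finset.card_erase_of_mem (s := Finset.univ.filter (fun u => G.Adj v u)) (a := a.1)
          (by simp [hva])
        have := hd v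
        have := hd a
        have := Finset.card_union_le ((Finset.univ.filter (fun u => G.Adj a u)).erase v)
            ((Finset.univ.filter (fun u => G.Adj v u)).erase a.1)
        omega
      · refine (Finset.card_le_card ?_).trans (hd a)
        intro u hu
        simp only [Finset.mem_map, Finset.mem_filter, Finset.mem_univ, true_and] at hu ⊢
        obtain ⟨u, ⟨h1, h2⟩, rfl⟩ := hu
        exact h2.elim id (fun h => absurd h.1 hva))
    have := D.fint
    let bag : D.ι → Finset V := fun y => (D.bag y).map (Function.Embedding.subtype _)
    have hmem : ∀ (u : V) (hu : u ≠ v) y, u ∈ bag y ↔ (⟨u, hu⟩ : {y : V // y ≠ v}) ∈ D.bag y := by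
      intro u hu y
      simp [bag, hu]
    have hx : ∃ x, Finset.univ.filter (fun u => G.Adj v u) ⊆ bag x := by
      have h2 := hd v
      have hcases : (Finset.univ.filter (fun u => G.Adj v u)).card = 0 ∨
        (Finset.univ.filter (fun u => G.Adj v u)).card = 1 ∨
        (Finset.univ.filter (fun u => G.Adj v u)).card = 2 := by omega
      have hmN : ∀ u, u ∈ Finset.univ.filter (fun u => G.Adj v u) ↔ G.Adj v u := by simp
      rcases hcases with h | h | h
      · rw [Finset.card_eq_zero] at h
        obtain ⟨x⟩ := D.nonempty
        exact ⟨x, by rw [h]; simp⟩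
      · rw [Finset.card_eq_one] at h
        obtain ⟨a, h⟩ := h
        have ha : G.Adj v a := (hmN a).1 (by rw [h]; simp)
        obtain ⟨x, hx⟩ := (D.support_conn ⟨a, ha.ne'⟩).nonempty
        refine ⟨x, ?_⟩
        rw [h, Finset.singleton_subset_iff, hmem a ha.ne']
        exact hx
      · rw [Finset.card_eq_two] at h
        obtain ⟨a, b, hab, h⟩ := h
        have ha : G.Adj v a := (hmN a).1 (by rw [h]; simp)
        have hb : G.Adj v b := (hmN b).1 (by rw [h]; simp)
        obtain ⟨x, h1, h2⟩ := D.edge_mem (v := ⟨a, ha.ne'⟩) (w := ⟨b, hb.ne'⟩)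
          ⟨fun h => hab (congrArg Subtype.val h), Or.inr ⟨ha, hb⟩⟩
        refine ⟨x, ?_⟩
        rw [h, Finset.insert_subset_iff, Finset.singleton_subset_iff, hmem a ha.ne', hmem b hb.ne']
        exact ⟨h1, h2⟩
    obtain ⟨x, hx⟩ := hx
    refine ⟨attach G v (Finset.univ.filter (fun u => G.Adj v u)) (by simp) D.ι D.fint D.tree
      D.isTree bag ?_ ?_ x hx, ?_⟩
    · intro a b ha hb hab
      obtain ⟨x, h1, h2⟩ := D.edge_mem (v := ⟨a, ha⟩) (w := ⟨b, hb⟩)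
        ⟨fun h => hab.ne (congrArg Subtype.val h), Or.inl hab⟩
      exact ⟨x, (hmem a ha x).2 h1, (hmem b hb x).2 h2⟩
    · intro u hu
      have := D.support_conn ⟨u, hu⟩
      have he : {x | u ∈ bag x} = {x | (⟨u, hu⟩ : {y : V // y ≠ v}) ∈ D.bag x} := by
        ext y; exact hmem u hu y
      rw [he]; exact this
    · intro y
      cases y with
      | none =>
        show (insert v (Finset.univ.filter (fun u => G.Adj v u))).card ≤ 4
        have := Finset.card_insert_le v (Finset.univ.filter (fun u => G.Adj v u))
        have := hd v
        omega
      | some y =>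
        show ((bag y).erase v).card ≤ 4
        refine (Finset.card_erase_le).trans ?_
        rw [Finset.card_map]
        exact hD y

def bigSize {V : Type*} (B : Finset V) : ℕ := if 5 ≤ B.card then B.card else 0

def TreeDecomp.measure {V : Type*} {G : SimpleGraph V} (D : TreeDecomp G) : ℕ :=
  ∑ x ∈ @Finset.univ D.ι D.fint, bigSize (D.bag x)

lemma bigSize_mono {V : Type*} {A B : Finset V} (h : A ⊆ B) : bigSize A ≤ bigSize B := by
  have := Finset.card_le_card h
  unfold bigSize
  split_ifs <;> omega

lemma treewidth_le {V : Type*} {G : SimpleGraph V} (D : TreeDecomp G) (w : ℕ) (h : D.widthLE w) :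
    treewidth G ≤ w := Nat.sInf_le ⟨D, h⟩

lemma exists_opt {V : Type*} [Fintype V] (G : SimpleGraph V) :
    ∃ D : TreeDecomp G, D.widthLE (treewidth G) := by
  refine Nat.sInf_mem (s := {w : ℕ | ∃ D : TreeDecomp G, D.widthLE w}) ⟨Fintype.card V, trivDecomp G, ?_⟩
  intro x
  show (Finset.univ : Finset V).card ≤ _
  rw [Finset.card_univ]; omega

/-- Every graph with maximum degree at most 3 has an optimal tree-decomposition (of
width `tw(G)`) in which every bag `B` satisfies `tw(G[B]) ≤ 3`. -/
theorem maxdeg3_optimal_decomp {V : Type*} [Fintype V] (G : SimpleGraph V)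
    [DecidableRel G.Adj] (hΔ : ∀ v : V, G.degree v ≤ 3) :
    ∃ D : TreeDecomp G, D.widthLE (treewidth G) ∧
      ∀ x : D.ι, treewidth (G.induce ((D.bag x : Set V))) ≤ 3 := by
  classical
  let P : ℕ → Prop := fun m => ∃ D : TreeDecomp G, D.widthLE (treewidth G) ∧ D.measure = m
  have hP : ∃ m, P m := by
    obtain ⟨D, hD⟩ := exists_opt G
    exact ⟨_, D, hD, rfl⟩
  obtain ⟨D, hD, hm⟩ := Nat.find_spec hP
  have hmin : ∀ D' : TreeDecomp G, D'.widthLE (treewidth G) → D.measure ≤ D'.measure := by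
    intro D' hD'
    rw [hm]
    exact Nat.find_min' hP ⟨D', hD', rfl⟩
  refine ⟨D, hD, ?_⟩
  intro x
  by_cases hsmall : (D.bag x).card ≤ 4
  · refine treewidth_le (trivDecomp _) 3 ?_
    intro y
    show (Finset.univ : Finset _).card ≤ 4
    rw [Finset.card_univ]
    simpa using hsmall
  have key : ∀ v ∈ D.bag x, ¬ G.neighborFinset v ⊆ D.bag x := by
    intro v hv hsub
    have := D.fint
    have hd := hΔ v
    have hcard : (insert v (G.neighborFinset v)).card ≤ 4 := by
      have := Finset.card_insert_le v (G.neighborFinset v)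
      rw [G.card_neighborFinset_eq_degree v] at this
      omega
    let D' := attach G v (G.neighborFinset v) (by simp) D.ι D.fint D.tree D.isTree D.bag
      (fun a b _ _ h => D.edge_mem h) (fun u _ => D.support_conn u) x hsub
    have hw : D'.widthLE (treewidth G) := by
      intro y
      cases y with
      | none =>
        show (insert v (G.neighborFinset v)).card ≤ _
        have := hD x
        omega
      | some y =>
        show ((D.bag y).erase v).card ≤ _
        exact (Finset.card_erase_le).trans (hD y)
    have h1 := hmin D' hw
    have h2 : D'.measure = bigSize (insert v (G.neighborFinset v)) +
        ∑ y ∈ @Finset.univ D.ι D.fint, bigSize ((D.bag y).erase v) := by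
      exact @Fintype.sum_option D.ι ℕ D.fint _
        (fun y => bigSize (y.elim (insert v (G.neighborFinset v)) (fun y => (D.bag y).erase v)))
    have h3 : bigSize (insert v (G.neighborFinset v)) = 0 := by
      unfold bigSize; rw [if_neg (by omega)]
    have h4 : ∑ y ∈ @Finset.univ D.ι D.fint, bigSize ((D.bag y).erase v) < D.measure := by
      refine Finset.sum_lt_sum (fun y _ => bigSize_mono (Finset.erase_subset _ _))
        ⟨x, @Finset.mem_univ _ D.fint _, ?_⟩
      have := Finset.card_erase_of_mem hv
      unfold bigSize
      split_ifs <;> omega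
    omega
  obtain ⟨E, hE⟩ := deg2 _ (G.induce ((D.bag x : Set V))) rfl (by
    rintro ⟨v, hv⟩
    have hk := key v hv
    rw [Finset.not_subset] at hk
    obtain ⟨u, hu, hux⟩ := hk
    have hc := Finset.card_erase_of_mem hu
    rw [G.card_neighborFinset_eq_degree v] at hc
    have hd := hΔ v
    rw [← Finset.card_map (Function.Embedding.subtype _)]
    refine (Finset.card_le_card (t := (G.neighborFinset v).erase u) ?_).trans (by omega)
    intro w hw
    simp only [Finset.mem_map, Finset.mem_filter, Finset.mem_univ, true_and] at hw
    obtain ⟨w, h1, rfl⟩ := hw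
    have h2 : w.1 ≠ u := by
      intro h
      exact hux (h ▸ w.2)
    have h3 : G.Adj v w.1 := h1
    simp [h2, h3])
  exact treewidth_le E 3 hE
end

section
/- For any apex-forest H with |V(H)| ≥ 2, every H-minor-free graph has treewidth at most |V(H)| − 2. In particular, every K_{2,n}-minor-free graph has treewidth at most n. -/
open SimpleGraph

/-- `H` is a minor of `G`, via branch sets. -/
def IsMinor {W V : Type*} (H : SimpleGraph W) (G : SimpleGraph V) : Prop :=
  ∃ B : W → Set V,
    (∀ w, (B w).Nonempty) ∧
    (∀ w₁ w₂, w₁ ≠ w₂ → Disjoint (B w₁) (B w₂)) ∧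
    (∀ w, (G.induce (B w)).Connected) ∧
    ∀ ⦃w₁ w₂ : W⦄, H.Adj w₁ w₂ → ∃ v₁ ∈ B w₁, ∃ v₂ ∈ B w₂, G.Adj v₁ v₂



namespace AF

variable {V : Type*}

def Cn (G : SimpleGraph V) (P : Set V) : Prop := (G.induce P).Connected

theorem Cn.nonempty {G : SimpleGraph V} {P : Set V} (h : Cn G P) : P.Nonempty := by
  obtain ⟨x⟩ := SimpleGraph.Connected.nonempty h
  exact ⟨x.1, x.2⟩

theorem Cn.single (G : SimpleGraph V) (a : V) : Cn G {a} := by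
  have : Subsingleton ({a} : Set V) := by
    constructor; rintro ⟨x, hx⟩ ⟨y, hy⟩; simp at hx hy; simp [hx, hy]
  refine (SimpleGraph.connected_iff _).2 ⟨?_, ⟨⟨a, rfl⟩⟩⟩
  intro x y
  rw [Subsingleton.elim x y]

theorem Cn.union {G : SimpleGraph V} {P Q : Set V} (hP : Cn G P) (hQ : Cn G Q) {a : V}
    (h1 : a ∈ P) (h2 : a ∈ Q) : Cn G (P ∪ Q) :=
  SimpleGraph.induce_union_connected hP.preconnected hQ.preconnected ⟨a, h1, h2⟩

theorem Cn.union_adj {G : SimpleGraph V} {P Q : Set V} (hP : Cn G P) (hQ : Cn G Q) {a b : V}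
    (h1 : a ∈ P) (h2 : b ∈ Q) (h : G.Adj a b) : Cn G (P ∪ Q) :=
  SimpleGraph.connected_induce_union hP.preconnected hQ.preconnected h1 h2 h

theorem Cn.closed {G : SimpleGraph V} {P R : Set V} (hP : Cn G P) {a : V}
    (h1 : a ∈ P) (h2 : a ∈ R) (h : ∀ u ∈ P, u ∈ R → ∀ v ∈ P, G.Adj u v → v ∈ R) : P ⊆ R := by
  intro b hb
  obtain ⟨p⟩ := hP.preconnected ⟨a, h1⟩ ⟨b, hb⟩
  have : ∀ (x y : P) (p : (G.induce P).Walk x y), x.1 ∈ R → y.1 ∈ R := by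
    intro x y p
    induction p with
    | nil => exact id
    | @cons u v w huv _ ih =>
      intro hu
      exact ih (h _ u.2 hu _ v.2 huv)
  exact this _ _ p h2

theorem Cn.mono {G G' : SimpleGraph V} (hG : G ≤ G') {P : Set V} (hP : Cn G P) : Cn G' P :=
  SimpleGraph.Connected.mono (fun _ _ h => hG h) hP

theorem Cn.patches {G : SimpleGraph V} {P : Set V} {a : V} (ha : a ∈ P)
    (h : ∀ b ∈ P, ∃ Q ⊆ P, Cn G Q ∧ a ∈ Q ∧ b ∈ Q) : Cn G P := by
  refine SimpleGraph.induce_connected_of_patches a ha ?_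
  intro b hb
  obtain ⟨Q, hQ, hc, h1, h2⟩ := h b hb
  exact ⟨Q, hQ, h1, h2, hc.preconnected _ _⟩

def rch (G : SimpleGraph V) (Z : Set V) (a : V) : Set V :=
  {b | ∃ P, Cn G P ∧ a ∈ P ∧ b ∈ P ∧ ∀ z ∈ P, z ∉ Z}

theorem rch_self {G : SimpleGraph V} {Z : Set V} {a : V} (h : a ∉ Z) : a ∈ rch G Z a :=
  ⟨{a}, Cn.single G a, rfl, rfl, by simpa using h⟩

theorem rch_avoid {G : SimpleGraph V} {Z : Set V} {a b : V} (h : b ∈ rch G Z a) : b ∉ Z := by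
  obtain ⟨P, _, _, h2, h3⟩ := h
  exact h3 _ h2

theorem sub_rch {G : SimpleGraph V} {Z : Set V} {a : V} {P : Set V} (h : Cn G P) (ha : a ∈ P)
    (hZ : ∀ z ∈ P, z ∉ Z) : P ⊆ rch G Z a := fun b hb => ⟨P, h, ha, hb, hZ⟩

theorem rch_cn {G : SimpleGraph V} {Z : Set V} {a : V} (h : a ∉ Z) : Cn G (rch G Z a) := by
  refine Cn.patches (rch_self h) ?_
  rintro b ⟨P, h1, h2, h3, h4⟩
  exact ⟨P, sub_rch h1 h2 h4, h1, h2, h3⟩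

theorem rch_closed {G : SimpleGraph V} {Z : Set V} {a u v : V} (h : u ∈ rch G Z a)
    (hv : v ∉ Z) (huv : G.Adj u v) : v ∈ rch G Z a := by
  obtain ⟨P, h1, h2, h3, h4⟩ := h
  refine ⟨P ∪ {v}, h1.union_adj (Cn.single G v) h3 rfl huv, Or.inl h2, Or.inr rfl, ?_⟩
  rintro z (hz | rfl)
  · exact h4 z hz
  · exact hv

def res (G : SimpleGraph V) (D : Set V) : SimpleGraph V where
  Adj u v := G.Adj u v ∧ u ∈ D ∧ v ∈ D
  symm := ⟨fun _ _ h => ⟨h.1.symm, h.2.2, h.2.1⟩⟩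
  loopless := ⟨fun _ h => G.loopless.irrefl _ h.1⟩

theorem res_le (G : SimpleGraph V) (D : Set V) : res G D ≤ G := fun _ _ h => h.1

theorem Cn.res_sub {G : SimpleGraph V} {D P : Set V} (h : Cn (res G D) P) {a : V} (ha : a ∈ P)
    (hD : a ∈ D) : P ⊆ D := h.closed ha hD (fun _ _ _ _ _ h => h.2.2)

theorem rch_res_sub {G : SimpleGraph V} {D Z : Set V} {a : V} (hD : a ∈ D) :
    rch (res G D) Z a ⊆ D := by
  rintro b ⟨P, h1, h2, h3, _⟩
  exact h1.res_sub h2 hD h3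

def Sep (G : SimpleGraph V) (A B Z : Set V) : Prop :=
  ∀ P, Cn G P → (∃ a ∈ A, a ∈ P) → (∃ b ∈ B, b ∈ P) → ∃ z ∈ Z, z ∈ P

def Linked (G : SimpleGraph V) (A B : Set V) (k : ℕ) : Prop :=
  ∃ P : Fin k → Set V, (∀ i j x, x ∈ P i → x ∈ P j → i = j) ∧
    ∀ i, Cn G (P i) ∧ (∃ a ∈ A, a ∈ P i) ∧ ∃ b ∈ B, b ∈ P i

theorem Linked.symm {G : SimpleGraph V} {A B : Set V} {k : ℕ} (h : Linked G A B k) :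
    Linked G B A k := by
  obtain ⟨P, h1, h2⟩ := h
  exact ⟨P, h1, fun i => ⟨(h2 i).1, (h2 i).2.2, (h2 i).2.1⟩⟩

/-- reindex a linkage by its starting set -/
theorem Linked.index [Finite V] {G : SimpleGraph V} {A B : Set V} {k : ℕ} (h : Linked G A B k)
    (hA : A.ncard = k) : ∃ P : V → Set V, (∀ i ∈ A, ∀ j ∈ A, ∀ x, x ∈ P i → x ∈ P j → i = j) ∧
    ∀ i ∈ A, Cn G (P i) ∧ i ∈ P i ∧ ∃ b ∈ B, b ∈ P i := by
  classical
  obtain ⟨P, h1, h2⟩ := h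
  choose f hfA hfP using fun i => (h2 i).2.1
  have hinj : Function.Injective f := fun i j hij => h1 i j (f i) (hfP i) (hij ▸ hfP j)
  have hr : Set.range f = A := by
    apply Set.eq_of_subset_of_ncard_le
    · rintro _ ⟨i, rfl⟩; exact hfA i
    · rw [hA, ← Set.image_univ, Set.ncard_image_of_injective _ hinj]; simp
    · exact Set.toFinite _
  have : ∀ a : V, ∃ i : Set V, ∀ j, f j = a → i = P j := by
    intro a
    by_cases h : ∃ j, f j = a
    · obtain ⟨j, hj⟩ := h
      exact ⟨P j, fun j' hj' => by rw [hinj (hj.trans hj'.symm)]⟩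
    · exact ⟨∅, fun j hj => (h ⟨j, hj⟩).elim⟩
  choose Q hQ using this
  refine ⟨Q, ?_, ?_⟩
  · intro i hi j hj x
    rw [← hr] at hi hj
    obtain ⟨i, rfl⟩ := hi
    obtain ⟨j, rfl⟩ := hj
    rw [hQ _ i rfl, hQ _ j rfl]
    intro hx hy
    rw [h1 i j x hx hy]
  · intro i hi
    rw [← hr] at hi
    obtain ⟨i, rfl⟩ := hi
    rw [hQ _ i rfl]
    exact ⟨(h2 i).1, hfP i, (h2 i).2.2⟩

theorem Linked.of_index [Finite V] {G : SimpleGraph V} {A B I : Set V} {k : ℕ} (hI : I.ncard = k)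
    (P : V → Set V) (h1 : ∀ i ∈ I, ∀ j ∈ I, ∀ x, x ∈ P i → x ∈ P j → i = j)
    (h2 : ∀ i ∈ I, Cn G (P i) ∧ (∃ a ∈ A, a ∈ P i) ∧ ∃ b ∈ B, b ∈ P i) : Linked G A B k := by
  have e : Fin k ≃ I := by
    have := Finite.equivFin I
    rw [Nat.card_coe_set_eq, hI] at this
    exact this.symm
  refine ⟨fun i => P (e i), ?_, fun i => h2 _ (e i).2⟩
  intro i j x hx hy
  exact e.injective (Subtype.ext (h1 _ (e i).2 _ (e j).2 x hx hy))

theorem menger [Finite V] (G : SimpleGraph V) : ∀ (A B : Set V) (k : ℕ),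
    (∀ Z, Sep G A B Z → k ≤ Z.ncard) → Linked G A B k := by
  classical
  induction G using WellFoundedLT.induction with
  | ind G ih =>
  intro A B k hk
  by_cases hG : ∃ x y, G.Adj x y
  swap
  · have hs : Sep G A B (A ∩ B) := by
      rintro P hP ⟨a, ha, haP⟩ ⟨b, hb, hbP⟩
      have := hP.closed (R := {a}) haP rfl (fun u _ _ v _ h => (hG ⟨u, v, h⟩).elim) hbP
      rw [Set.mem_singleton_iff] at this
      subst this
      exact ⟨b, ⟨ha, hb⟩, hbP⟩
    obtain ⟨I, hI, hI2⟩ := Set.exists_subset_card_eq (hk _ hs)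
    refine Linked.of_index hI2 (fun v => {v}) ?_ ?_
    · rintro i - j - x hx hy
      simp at hx hy; rw [← hx, hy]
    · intro i hi
      exact ⟨Cn.single G i, ⟨i, (hI hi).1, rfl⟩, ⟨i, (hI hi).2, rfl⟩⟩
  obtain ⟨x0, y0, hxy0⟩ := hG
  set G' := G.deleteEdges {s(x0, y0)} with hG'
  have hlt : G' < G := by
    refine lt_of_le_of_ne (G.deleteEdges_le _) ?_
    intro h
    have : G'.Adj x0 y0 := h ▸ hxy0
    simp [hG'] at this
  by_cases hall : ∀ Z, Sep G' A B Z → k ≤ Z.ncard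
  · obtain ⟨P, h1, h2⟩ := ih G' hlt A B k hall
    exact ⟨P, h1, fun i => ⟨(h2 i).1.mono hlt.le, (h2 i).2⟩⟩
  push Not at hall
  obtain ⟨S, hS, hSk⟩ := hall
  -- the reachable side
  let R : Set V := {b | ∃ P, Cn G' P ∧ (∃ a ∈ A, a ∈ P) ∧ b ∈ P ∧ ∀ z ∈ P, z ∉ S}
  have hAR : ∀ a ∈ A, a ∈ R ∨ a ∈ S := by
    intro a ha
    by_cases h : a ∈ S
    · exact Or.inr h
    · exact Or.inl ⟨{a}, Cn.single _ a, ⟨a, ha, rfl⟩, rfl, by simpa using h⟩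
  have hRS : ∀ r ∈ R, r ∉ S := by
    rintro r ⟨P, _, _, h, h'⟩
    exact h' r h
  have hRB : ∀ b ∈ B, b ∉ R := by
    rintro b hb ⟨P, h1, h2, h3, h4⟩
    obtain ⟨z, hz, hzP⟩ := hS P h1 h2 ⟨b, hb, h3⟩
    exact h4 z hzP hz
  have hRc : ∀ u ∈ R, ∀ v, v ∉ S → G'.Adj u v → v ∈ R := by
    rintro u ⟨P, h1, ⟨a, ha, haP⟩, h3, h4⟩ v hv huv
    refine ⟨P ∪ {v}, h1.union_adj (Cn.single _ v) h3 rfl huv, ⟨a, ha, Or.inl haP⟩, Or.inr rfl, ?_⟩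
    rintro z (hz | rfl)
    · exact h4 z hz
    · exact hv
  have hex : ∃ x ∈ R, ∃ y, y ∉ R ∧ y ∉ S ∧ G.Adj x y := by
    by_contra hcon
    push Not at hcon
    refine absurd (hk S ?_) (not_le.2 hSk)
    rintro P hP ⟨a, ha, haP⟩ ⟨b, hb, hbP⟩
    by_contra hz
    push Not at hz
    have haR : a ∈ R := (hAR a ha).resolve_right (fun h => hz a h haP)
    have := hP.closed haP haR (fun u _ hu v hv huv => by
      by_contra hvR
      exact hcon u hu v hvR (fun h => hz v h hv) huv)
    exact hRB b hb (this hbP)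
  obtain ⟨x, hxR, y, hyR, hyS, hxy⟩ := hex
  have huniq : ∀ u ∈ R, ∀ v, v ∉ R → v ∉ S → G.Adj u v → u = x ∧ v = y := by
    have key : ∀ u ∈ R, ∀ v, v ∉ R → v ∉ S → G.Adj u v → s(u, v) = s(x0, y0) := by
      intro u hu v hv hvS huv
      by_contra hne
      apply hv
      apply hRc u hu v hvS
      simp only [hG', SimpleGraph.deleteEdges_adj, Set.mem_singleton_iff]
      exact ⟨huv, hne⟩
    intro u hu v hv hvS huv
    have h := (key u hu v hv hvS huv).trans (key x hxR y hyR hyS hxy).symm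
    rw [Sym2.eq_iff] at h
    rcases h with h | h
    · exact h
    · exact (hv (h.2 ▸ hxR)).elim
  let G1 := res G (R ∪ S)
  let G2 := res G Rᶜ
  have hG1 : G1 < G := by
    refine lt_of_le_of_ne (res_le _ _) ?_
    intro h
    have : G1.Adj x y := h ▸ hxy
    rcases this.2.2 with h | h
    · exact hyR h
    · exact hyS h
  have hG2 : G2 < G := by
    refine lt_of_le_of_ne (res_le _ _) ?_
    intro h
    have : G2.Adj x y := h ▸ hxy
    exact this.2.1 hxR
  have c1 : ∀ Z, Sep G1 A (insert x S) Z → Sep G A B Z := by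
    rintro Z hZ P hP ⟨a, ha, haP⟩ ⟨b, hb, hbP⟩
    by_contra hz
    push Not at hz
    have haZ : a ∉ Z := fun h => hz a h haP
    have haRS : a ∈ R ∪ S := hAR a ha
    have hsub : rch G1 Z a ⊆ R ∪ S := rch_res_sub haRS
    have hT : ∀ u ∈ rch G1 Z a, u ∉ insert x S := by
      intro u hu huT
      obtain ⟨z, hz, hz'⟩ := hZ _ (rch_cn haZ) ⟨a, ha, rch_self haZ⟩ ⟨u, huT, hu⟩
      exact rch_avoid hz' hz
    have hR : ∀ u ∈ rch G1 Z a, u ∈ R := fun u hu =>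
      (hsub hu).resolve_right (fun h => hT u hu (Or.inr h))
    have := hP.closed haP (rch_self haZ) (fun u _ hu v hv huv => by
      have hvRS : v ∈ R ∪ S := by
        by_contra h
        have h' := huniq u (hR u hu) v (fun h' => h (Or.inl h')) (fun h' => h (Or.inr h')) huv
        exact hT u hu (Or.inl h'.1)
      exact rch_closed hu (fun h => hz v h hv) ⟨huv, hsub hu, hvRS⟩)
    exact hRB b hb (hR b (this hbP))
  have c2 : ∀ Z, Sep G2 (insert y S) B Z → Sep G A B Z := by
    rintro Z hZ P hP ⟨a, ha, haP⟩ ⟨b, hb, hbP⟩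
    by_contra hz
    push Not at hz
    have hbZ : b ∉ Z := fun h => hz b h hbP
    have hsub : rch G2 Z b ⊆ Rᶜ := rch_res_sub (hRB b hb)
    have hT : ∀ u ∈ rch G2 Z b, u ∉ insert y S := by
      intro u hu huT
      obtain ⟨z, hz, hz'⟩ := hZ _ (rch_cn hbZ) ⟨u, huT, hu⟩ ⟨b, hb, rch_self hbZ⟩
      exact rch_avoid hz' hz
    have := hP.closed hbP (rch_self hbZ) (fun u _ hu v hv huv => by
      have hvR : v ∉ R := by
        intro h
        have h' := huniq v h u (hsub hu) (fun h => hT u hu (Or.inr h)) huv.symm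
        exact hT u hu (Or.inl h'.2)
      exact rch_closed hu (fun h => hz v h hv) ⟨huv, hsub hu, hvR⟩)
    rcases hAR a ha with h | h
    · exact hsub (this haP) h
    · exact hT a (this haP) (Or.inr h)
  have hxS : x ∉ S := hRS x hxR
  have hcard : S.ncard + 1 = k := by
    have : Sep G A B (insert x S) := c1 _ (fun P _ _ h => h)
    have := hk _ this
    rw [Set.ncard_insert_of_notMem hxS] at this
    omega
  obtain ⟨P, hP1, hP2⟩ := (ih G1 hG1 A (insert x S) k (fun Z hZ => hk Z (c1 Z hZ))).symm.index
    (by rw [Set.ncard_insert_of_notMem hxS, hcard])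
  obtain ⟨Q, hQ1, hQ2⟩ := (ih G2 hG2 (insert y S) B k (fun Z hZ => hk Z (c2 Z hZ))).index
    (by rw [Set.ncard_insert_of_notMem hyS, hcard])
  let g : V → V := fun v => if v = x then y else v
  have hgx : g x = y := by simp [g]
  have hgS : ∀ s ∈ S, g s = s := by
    intro s hs
    have : s ≠ x := by rintro rfl; exact hxS hs
    simp [g, this]
  have hgm : ∀ i ∈ insert x S, g i ∈ insert y S := by
    rintro i (rfl | hi)
    · rw [hgx]; exact Or.inl rfl
    · rw [hgS i hi]; exact Or.inr hi
  have hginj : ∀ i ∈ insert x S, ∀ j ∈ insert x S, g i = g j → i = j := by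
    rintro i (rfl | hi) j (rfl | hj) h
    · rfl
    · rw [hgx, hgS j hj] at h; exact (hyS (h ▸ hj)).elim
    · rw [hgx, hgS i hi] at h; exact (hyS (h ▸ hi)).elim
    · rwa [hgS i hi, hgS j hj] at h
  have hPs : ∀ i ∈ insert x S, P i ⊆ R ∪ S := by
    intro i hi
    refine (hP2 i hi).1.res_sub (hP2 i hi).2.1 ?_
    rcases hi with rfl | hi
    · exact Or.inl hxR
    · exact Or.inr hi
  have hQs : ∀ i ∈ insert y S, Q i ⊆ Rᶜ := by
    intro i hi
    refine (hQ2 i hi).1.res_sub (hQ2 i hi).2.1 ?_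
    rcases hi with rfl | hi
    · exact hyR
    · exact fun h => hRS i h hi
  have hPQ : ∀ i ∈ insert x S, ∀ j ∈ insert x S, ∀ v, v ∈ P i → v ∈ Q (g j) → i = j := by
    intro i hi j hj v hv hv'
    have hvS : v ∈ S := (hPs i hi hv).resolve_left (hQs _ (hgm j hj) hv')
    have e1 : i = v := hP1 i hi v (Or.inr hvS) v hv (hP2 v (Or.inr hvS)).2.1
    have e2 : g j = v := hQ1 _ (hgm j hj) v (Or.inr hvS) v hv' (hQ2 v (Or.inr hvS)).2.1
    subst e1
    exact hginj _ hi _ hj (by rw [hgS i hvS, e2])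
  refine Linked.of_index (I := insert x S) (by rw [Set.ncard_insert_of_notMem hxS, hcard])
    (fun i => P i ∪ Q (g i)) ?_ ?_
  · rintro i hi j hj v (hv | hv) (hw | hw)
    · exact hP1 i hi j hj v hv hw
    · exact hPQ i hi j hj v hv hw
    · exact (hPQ j hj i hi v hw hv).symm
    · exact hginj i hi j hj (hQ1 _ (hgm i hi) _ (hgm j hj) v hv hw)
  · intro i hi
    obtain ⟨p1, p2, a, ha, p3⟩ := hP2 i hi
    obtain ⟨q1, q2, b, hb, q3⟩ := hQ2 _ (hgm i hi)
    refine ⟨?_, ⟨a, ha, Or.inl p3⟩, ⟨b, hb, Or.inr q3⟩⟩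
    have p1' := p1.mono (res_le _ _)
    have q1' := q1.mono (res_le _ _)
    rcases hi with rfl | hi
    · exact p1'.union_adj q1' p2 q2 (by rw [hgx]; exact hxy)
    · exact p1'.union q1' p2 (by rw [hgS i hi] at q2 ⊢; exact q2)

theorem tree_path {ι : Type*} {T : SimpleGraph ι} (hT : T.IsTree) (s t : ι) :
    ∃ Q, Cn T Q ∧ s ∈ Q ∧ t ∈ Q ∧ ∀ Q', Cn T Q' → s ∈ Q' → t ∈ Q' → Q ⊆ Q' := by
  classical
  obtain ⟨p, hp, hu⟩ := hT.existsUnique_path s t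
  refine ⟨{v | v ∈ p.support}, p.connected_induce_support, p.start_mem_support,
    p.end_mem_support, ?_⟩
  intro Q' hQ hs ht
  obtain ⟨w⟩ := hQ.preconnected ⟨s, hs⟩ ⟨t, ht⟩
  have key : ∀ (x y : Q') (w : (T.induce Q').Walk x y),
      ∃ w' : T.Walk x.1 y.1, ∀ v ∈ w'.support, v ∈ Q' := by
    intro x y w
    induction w with
    | @nil u => exact ⟨Walk.nil, by simp⟩
    | @cons u v w huv _ ih =>
      obtain ⟨w', hw'⟩ := ih
      have huv' : T.Adj u.1 v.1 := huv
      refine ⟨Walk.cons huv' w', ?_⟩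
      intro z hz
      rw [Walk.support_cons, List.mem_cons] at hz
      rcases hz with rfl | hz
      · exact u.2
      · exact hw' z hz
  obtain ⟨w', hw'⟩ := key _ _ w
  have : (w'.toPath : T.Walk s t) = p := hu _ w'.toPath.2
  intro v hv
  apply hw'
  rw [Set.mem_ofPred_eq, ← this] at hv
  exact Walk.support_toPath_subset_support w' hv

theorem Cn.map {ι κ : Type*} {T : SimpleGraph ι} {T' : SimpleGraph κ} (f : ι → κ)
    (hf : ∀ a b, T.Adj a b → T'.Adj (f a) (f b)) {P : Set ι} (h : Cn T P) : Cn T' (f '' P) := by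
  obtain ⟨a, ha⟩ := h.nonempty
  have := h.closed (R := {b | b ∈ P ∧ ∃ Q ⊆ f '' P, Cn T' Q ∧ f a ∈ Q ∧ f b ∈ Q}) ha
    ⟨ha, {f a}, by simpa using ⟨a, ha, rfl⟩, Cn.single _ _, rfl, rfl⟩ (by
      rintro u hu ⟨_, Q, h1, h2, h3, h4⟩ v hv huv
      refine ⟨hv, Q ∪ {f v}, ?_, h2.union_adj (Cn.single _ _) h4 rfl (hf _ _ huv), Or.inl h3,
        Or.inr rfl⟩
      rintro z (hz | rfl)
      · exact h1 hz
      · exact ⟨v, hv, rfl⟩)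
  refine Cn.patches (a := f a) ⟨a, ha, rfl⟩ ?_
  rintro _ ⟨b, hb, rfl⟩
  exact (this hb).2

theorem sum_tree {ι κ : Type*} [Finite ι] [Finite κ] {T : SimpleGraph ι} {T' : SimpleGraph κ}
    (h : T.IsTree) (h' : T'.IsTree) (a : ι) (b : κ) :
    (SimpleGraph.sum T T' ⊔ SimpleGraph.edge (Sum.inl a) (Sum.inr b)).IsTree := by
  refine ⟨Connected.sum_sup_edge h.1 h'.1, ?_⟩
  refine IsAcyclic.sup_edge_of_not_reachable (not_reachable_sum_inl_inr a b) ?_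
  rw [isAcyclic_iff_forall_adj_isBridge]
  have h1 := isAcyclic_iff_forall_adj_isBridge.1 h.2
  have h2 := isAcyclic_iff_forall_adj_isBridge.1 h'.2
  have e1 : ∀ (x y : ι) (u v : ι ⊕ κ),
      ((SimpleGraph.sum T T').deleteEdges {s(Sum.inl x, Sum.inl y)}).Reachable u v →
      ∀ u', u = Sum.inl u' → ∃ v', v = Sum.inl v' ∧ (T.deleteEdges {s(x, y)}).Reachable u' v' := by
    rintro x y u v ⟨p⟩
    induction p with
    | nil => rintro u' rfl; exact ⟨u', rfl, Reachable.refl _⟩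
    | @cons u w v huw _ ih =>
      rintro u' rfl
      rcases w with w | w
      · obtain ⟨v', hv', hr⟩ := ih w rfl
        refine ⟨v', hv', Reachable.trans (Adj.reachable ?_) hr⟩
        simpa using huw
      · simp at huw
  have e2 : ∀ (x y : κ) (u v : ι ⊕ κ),
      ((SimpleGraph.sum T T').deleteEdges {s(Sum.inr x, Sum.inr y)}).Reachable u v →
      ∀ u', u = Sum.inr u' → ∃ v', v = Sum.inr v' ∧ (T'.deleteEdges {s(x, y)}).Reachable u' v' := by
    rintro x y u v ⟨p⟩
    induction p with
    | nil => rintro u' rfl; exact ⟨u', rfl, Reachable.refl _⟩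
    | @cons u w v huw _ ih =>
      rintro u' rfl
      rcases w with w | w
      · simp at huw
      · obtain ⟨v', hv', hr⟩ := ih w rfl
        refine ⟨v', hv', Reachable.trans (Adj.reachable ?_) hr⟩
        simpa using huw
  rintro (x | x) (y | y) hxy
  · have := h1 (by simpa using hxy)
    rw [isBridge_iff] at this ⊢
    intro hr
    obtain ⟨v', hv', hr'⟩ := e1 x y _ _ hr x rfl
    cases hv'
    exact this hr'
  · simp at hxy
  · simp at hxy
  · have := h2 (by simpa using hxy)
    rw [isBridge_iff] at this ⊢
    intro hr
    obtain ⟨v', hv', hr'⟩ := e2 x y _ _ hr x rfl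
    cases hv'
    exact this hr'

/-- a tree-decomposition of `G[U]` with a bag equal to `X` all of whose bags satisfy `q` -/
def HasPD (G : SimpleGraph V) (q : Finset V → Prop) (X U : Set V) : Prop :=
  ∃ (ι : Type) (_ : Fintype ι) (T : SimpleGraph ι) (bag : ι → Finset V) (s : ι), T.IsTree ∧
    (bag s : Set V) = X ∧ (∀ t, q (bag t)) ∧ (∀ t, (bag t : Set V) ⊆ U) ∧
    (∀ v ∈ U, ∀ w ∈ U, G.Adj v w → ∃ t, v ∈ bag t ∧ w ∈ bag t) ∧
    ∀ v ∈ U, Cn T {t | v ∈ bag t}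

theorem HasPD.single (G : SimpleGraph V) (q : Finset V → Prop) (X : Finset V) (hX : q X) :
    HasPD G q X X := by
  refine ⟨Unit, inferInstance, ⊥, fun _ => X, (), IsTree.of_subsingleton, rfl, fun _ => hX,
    fun _ => subset_rfl, fun v hv w hw _ => ⟨(), hv, hw⟩, ?_⟩
  intro v hv
  have : {t : Unit | v ∈ X} = {()} := by
    ext t; simpa using hv
  rw [this]
  exact Cn.single _ _

theorem HasPD.glue {G : SimpleGraph V} {q : Finset V → Prop} {X Y U U' : Set V}
    (h : HasPD G q X U) (h' : HasPD G q Y U') (hX : ∀ v ∈ U, v ∈ U' → v ∈ X ∧ v ∈ Y)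
    (hE : ∀ v ∈ U, ∀ w ∈ U', G.Adj v w → w ∈ U ∨ v ∈ U') : HasPD G q X (U ∪ U') := by
  obtain ⟨ι, fι, T, bag, s, hT, hs, hq, hsub, hed, hc⟩ := h
  obtain ⟨κ, fκ, T', bag', s', hT', hs', hq', hsub', hed', hc'⟩ := h'
  have hm : ∀ v, v ∈ bag s ↔ v ∈ X := by intro v; rw [← hs]; rfl
  have hm' : ∀ v, v ∈ bag' s' ↔ v ∈ Y := by intro v; rw [← hs']; rfl
  have hTl : ∀ a b, T.Adj a b → (SimpleGraph.sum T T' ⊔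
      SimpleGraph.edge (Sum.inl s) (Sum.inr s')).Adj (Sum.inl a) (Sum.inl b) :=
    fun a b hab => Or.inl (by simpa using hab)
  have hTr : ∀ a b, T'.Adj a b → (SimpleGraph.sum T T' ⊔
      SimpleGraph.edge (Sum.inl s) (Sum.inr s')).Adj (Sum.inr a) (Sum.inr b) :=
    fun a b hab => Or.inl (by simpa using hab)
  refine ⟨ι ⊕ κ, inferInstance, _, Sum.elim bag bag', Sum.inl s, sum_tree hT hT' s s', hs,
    ?_, ?_, ?_, ?_⟩
  · rintro (t | t)
    · exact hq t
    · exact hq' t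
  · rintro (t | t)
    · exact (hsub t).trans Set.subset_union_left
    · exact (hsub' t).trans Set.subset_union_right
  · have hl : ∀ v ∈ U, ∀ w ∈ U, G.Adj v w → ∃ t, v ∈ Sum.elim bag bag' t ∧
        w ∈ Sum.elim bag bag' t := fun v hv w hw hvw => by
      obtain ⟨t, ht⟩ := hed v hv w hw hvw
      exact ⟨Sum.inl t, ht⟩
    have hr : ∀ v ∈ U', ∀ w ∈ U', G.Adj v w → ∃ t, v ∈ Sum.elim bag bag' t ∧
        w ∈ Sum.elim bag bag' t := fun v hv w hw hvw => by
      obtain ⟨t, ht⟩ := hed' v hv w hw hvw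
      exact ⟨Sum.inr t, ht⟩
    rintro v (hv | hv) w (hw | hw) hvw
    · exact hl v hv w hw hvw
    · rcases hE v hv w hw hvw with h | h
      · exact hl v hv w h hvw
      · exact hr v h w hw hvw
    · rcases hE w hw v hv hvw.symm with h | h
      · exact hl v h w hw hvw
      · exact hr v hv w h hvw
    · exact hr v hv w hw hvw
  · intro v hv
    have hset : {t | v ∈ Sum.elim bag bag' t} =
        Sum.inl '' {t | v ∈ bag t} ∪ Sum.inr '' {t | v ∈ bag' t} := by
      ext (t | t) <;> simp
    rw [hset]
    by_cases h1 : v ∈ U <;> by_cases h2 : v ∈ U'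
    · obtain ⟨hx, hy⟩ := hX v h1 h2
      refine Cn.union_adj ((hc v h1).map Sum.inl hTl) ((hc' v h2).map Sum.inr hTr)
        (a := Sum.inl s) (b := Sum.inr s') ⟨s, (hm v).2 hx, rfl⟩ ⟨s', (hm' v).2 hy, rfl⟩ ?_
      right
      simp [edge_adj]
    · have : {t | v ∈ bag' t} = ∅ := by
        ext t; simp; exact fun h => h2 (hsub' t h)
      rw [this, Set.image_empty, Set.union_empty]
      exact (hc v h1).map Sum.inl hTl
    · have : {t | v ∈ bag t} = ∅ := by
        ext t; simp; exact fun h => h1 (hsub t h)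
      rw [this, Set.image_empty, Set.empty_union]
      exact (hc' v h2).map Sum.inr hTr
    · exact (hv.elim h1 h2).elim

theorem supp_cn {G : SimpleGraph V} (D : TreeDecomp G) {P : Set V} (hP : Cn G P) :
    Cn D.tree {t | ∃ p ∈ P, p ∈ D.bag t} := by
  have hc : ∀ v, Cn D.tree {t | v ∈ D.bag t} := D.support_conn
  obtain ⟨a, ha⟩ := hP.nonempty
  obtain ⟨t0, ht0⟩ := (hc a).nonempty
  have := hP.closed (R := {b | ∃ Q ⊆ {t | ∃ p ∈ P, p ∈ D.bag t}, Cn D.tree Q ∧ t0 ∈ Q ∧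
      {t | b ∈ D.bag t} ⊆ Q}) ha
    ⟨{t | a ∈ D.bag t}, fun t ht => ⟨a, ha, ht⟩, hc a, ht0, subset_rfl⟩ (by
      rintro u hu ⟨Q, h1, h2, h3, h4⟩ v hv huv
      obtain ⟨t, htu, htv⟩ := D.edge_mem huv
      refine ⟨Q ∪ {t | v ∈ D.bag t}, ?_, h2.union (hc v) (h4 htu) htv, Or.inl h3,
        Set.subset_union_right⟩
      rintro z (hz | hz)
      · exact h1 hz
      · exact ⟨v, hv, hz⟩)
  refine Cn.patches (a := t0) ⟨a, ha, ht0⟩ ?_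
  rintro t ⟨p, hp, hpt⟩
  obtain ⟨Q, h1, h2, h3, h4⟩ := this hp
  exact ⟨Q, h1, h2, h3, h4 hpt⟩

theorem glue_all [Finite V] {G : SimpleGraph V} {q : Finset V → Prop} {X : Finset V} (hX : q X)
    (h : ∀ c, c ∉ (X : Set V) → HasPD G q X (X ∪ rch G X c)) : HasPD G q X Set.univ := by
  have key : ∀ (n : ℕ) (U : Set V), U.ncard = n → (∀ u ∈ U, u ∉ (X : Set V)) →
      (∀ u ∈ U, ∀ v, v ∉ (X : Set V) → G.Adj u v → v ∈ U) → HasPD G q X (X ∪ U) := by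
    intro n
    induction n using Nat.strong_induction_on with
    | _ n ih =>
    intro U hn hUX hcl
    rcases U.eq_empty_or_nonempty with rfl | ⟨c, hc⟩
    · rw [Set.union_empty]
      exact HasPD.single G q X hX
    have hcX := hUX c hc
    set C := rch G X c with hC
    have hCU : C ⊆ U := (rch_cn hcX).closed (rch_self hcX) hc
      (fun u _ hu v hv huv => hcl u hu v (rch_avoid hv) huv)
    have hlt : (U \ C).ncard < n := by
      rw [← hn]
      exact Set.ncard_lt_ncard ⟨Set.sdiff_subset, fun h => (h hc).2 (rch_self hcX)⟩
    have h2 := ih _ hlt (U \ C) rfl (fun u hu => hUX u hu.1) (by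
      intro u hu v hv huv
      refine ⟨hcl u hu.1 v hv huv, fun hvC => hu.2 ?_⟩
      exact rch_closed hvC (hUX u hu.1) huv.symm)
    have h3 := (h c hcX).glue h2 (by
      rintro v (hv | hv) (hw | hw)
      · exact ⟨hv, hv⟩
      · exact ⟨hv, hv⟩
      · exact ⟨hw, hw⟩
      · exact (hw.2 hv).elim) (by
      rintro v (hv | hv) w (hw | hw) hvw
      · exact Or.inl (Or.inl hw)
      · exact Or.inr (Or.inl hv)
      · exact Or.inl (Or.inl hw)
      · exact Or.inl (Or.inr (rch_closed hv (hUX w hw.1) hvw)))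
    have e : ((X : Set V) ∪ U) = ((X : Set V) ∪ rch G X c) ∪ ((X : Set V) ∪ U \ C) := by
      ext v
      constructor
      · rintro (hv | hv)
        · exact Or.inl (Or.inl hv)
        · by_cases hvC : v ∈ C
          · exact Or.inl (Or.inr hvC)
          · exact Or.inr (Or.inr ⟨hv, hvC⟩)
      · rintro ((hv | hv) | (hv | hv))
        · exact Or.inl hv
        · exact Or.inr (hCU hv)
        · exact Or.inl hv
        · exact Or.inr hv.1
    rw [e]
    exact h3
  have := key _ ((X : Set V)ᶜ) rfl (fun u hu => hu) (fun u _ v hv _ => hv)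
  rwa [Set.union_compl_self] at this

def Bramble (G : SimpleGraph V) (𝓑 : Set (Set V)) : Prop :=
  ∀ B ∈ 𝓑, ∀ B' ∈ 𝓑, Cn G (B ∪ B')

theorem Bramble.cn {G : SimpleGraph V} {𝓑 : Set (Set V)} (h : Bramble G 𝓑) {B : Set V}
    (hB : B ∈ 𝓑) : Cn G B := by
  have := h B hB B hB
  rwa [Set.union_self] at this

def Adm (k : ℕ) (𝓑 : Set (Set V)) (F : Finset V) : Prop :=
  F.card ≤ k ∨ ∃ B ∈ 𝓑, ∀ z ∈ F, z ∉ B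

theorem case_one [Finite V] {G : SimpleGraph V} {k : ℕ} {𝓑 : Set (Set V)} (h𝓑 : Bramble G 𝓑)
    {X : Finset V} (hX : X.card ≤ k) {c : V} (hc : c ∉ (X : Set V)) {B : Set V} (hB : B ∈ 𝓑)
    (hn : ¬ Cn G (rch G X c ∪ B)) : HasPD G (Adm k 𝓑) X (X ∪ rch G X c) := by
  set C := rch G X c with hC
  let F : Set V := C ∪ {v | ∃ u ∈ C, G.Adj u v}
  have hFB : ∀ z ∈ F, z ∉ B := by
    rintro z (hz | ⟨u, hu, huz⟩) hzB
    · exact hn ((rch_cn hc).union (h𝓑.cn hB) hz hzB)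
    · exact hn ((rch_cn hc).union_adj (h𝓑.cn hB) hu hzB huz)
  have hFX : ∀ z ∈ F, z ∈ C ∨ z ∈ (X : Set V) := by
    rintro z (hz | ⟨u, hu, huz⟩)
    · exact Or.inl hz
    · by_cases h : z ∈ (X : Set V)
      · exact Or.inr h
      · exact Or.inl (rch_closed hu h huz)
  have hf : F.Finite := Set.toFinite F
  have h2 := HasPD.single G (Adm k 𝓑) hf.toFinset (Or.inr ⟨B, hB, fun z hz => hFB z (by simpa using hz)⟩)
  rw [Set.Finite.coe_toFinset] at h2
  have h1 := HasPD.single G (Adm k 𝓑) X (Or.inl hX)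
  have h3 := h1.glue h2 (fun v h h' => ⟨h, h'⟩) (by
    rintro v hv w hw hvw
    rcases hFX w hw with h | h
    · exact Or.inr (Or.inr ⟨w, h, hvw.symm⟩)
    · exact Or.inl h)
  have e : ((X : Set V) ∪ C) = (X : Set V) ∪ F := by
    ext v
    constructor
    · rintro (hv | hv)
      · exact Or.inl hv
      · exact Or.inr (Or.inl hv)
    · rintro (hv | hv)
      · exact Or.inl hv
      · exact (hFX v hv).symm
  rw [e]
  exact h3

theorem case_two [Finite V] {G : SimpleGraph V} {k : ℕ} {𝓑 : Set (Set V)} (h𝓑 : Bramble G 𝓑)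
    {X : Finset V} (hX : X.card ≤ k) (hXc : ∀ B ∈ 𝓑, ∃ z ∈ X, z ∈ B)
    (hmin : ∀ Z : Set V, (∀ B ∈ 𝓑, ∃ z ∈ Z, z ∈ B) → X.card ≤ Z.ncard)
    {c : V} (hc : c ∉ (X : Set V)) (D : TreeDecomp G)
    (hD : ∀ t, Adm k (insert (rch G X c) 𝓑) (D.bag t)) {s : D.ι} (hs : ¬ Adm k 𝓑 (D.bag s)) :
    HasPD G (Adm k 𝓑) X (X ∪ rch G X c) := by
  classical
  set C := rch G X c with hC
  have hCX : ∀ v ∈ C, v ∉ X := fun v hv => rch_avoid hv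
  have hs1 : ∀ B ∈ 𝓑, ∃ z ∈ D.bag s, z ∈ B := by
    intro B hB
    by_contra h
    push Not at h
    exact hs (Or.inr ⟨B, hB, h⟩)
  have hsC : ∀ z ∈ D.bag s, z ∉ C := by
    rcases hD s with h | ⟨B, hB, h⟩
    · exact (hs (Or.inl h)).elim
    · rcases hB with rfl | hB
      · exact h
      · exact (hs (Or.inr ⟨B, hB, h⟩)).elim
  obtain ⟨P, hP1, hP2⟩ := (menger (res G Cᶜ) (X : Set V) (D.bag s : Set V) X.card (by
    intro Z hZ
    apply hmin
    intro B hB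
    by_contra hz
    push Not at hz
    obtain ⟨b, hbs, hbB⟩ := hs1 B hB
    have hbZ : b ∉ Z := fun h => hz b h hbB
    have hsub : rch (res G Cᶜ) Z b ⊆ Cᶜ := rch_res_sub (hsC b hbs)
    have hnX : ∀ u ∈ rch (res G Cᶜ) Z b, u ∉ X := by
      intro u hu huX
      obtain ⟨z, hz1, hz2⟩ := hZ _ (rch_cn hbZ) ⟨u, huX, hu⟩ ⟨b, hbs, rch_self hbZ⟩
      exact rch_avoid hz2 hz1
    have := (h𝓑.cn hB).closed (R := rch (res G Cᶜ) Z b) hbB (rch_self hbZ) (fun u _ hu v hv huv => by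
      refine rch_closed hu (fun h => hz v h hv) ⟨huv, hsub hu, ?_⟩
      intro hvC
      exact hsub hu (rch_closed hvC (hnX u hu) huv.symm))
    obtain ⟨x, hx, hxB⟩ := hXc B hB
    exact hnX x (this hxB) hx)).index (by simp)
  have hPC : ∀ x ∈ X, ∀ z ∈ P x, z ∉ C := by
    intro x hx z hz
    exact (hP2 x hx).1.res_sub (hP2 x hx).2.1 (fun h => hCX x h hx) hz
  have htt0 : ∀ x : V, ∃ t, x ∈ D.bag t := by
    intro x
    obtain ⟨t⟩ := (D.support_conn x).nonempty
    exact ⟨t.1, t.2⟩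
  choose tt htt' using htt0
  choose Q hQ1 hQ2 hQ3 hQ4 using fun x : V => tree_path D.isTree s (tt x)
  -- separation property
  have hsep : ∀ x t, t ∈ Q x → ∀ B, Cn G B → x ∈ B → (∃ z ∈ D.bag s, z ∈ B) →
      ∃ z ∈ D.bag t, z ∈ B := by
    rintro x t ht B hB hx ⟨z, hz, hzB⟩
    obtain ⟨p, hp, hpt⟩ := hQ4 x _ (supp_cn D hB) ⟨z, hzB, hz⟩ ⟨x, hx, htt' x⟩ ht
    exact ⟨p, hpt, hp⟩
  let W : D.ι → Finset V := fun t => {v ∈ D.bag t | v ∈ X ∨ v ∈ C} ∪ {x ∈ X | t ∈ Q x}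
  have hW : ∀ t v, v ∈ W t ↔ (v ∈ D.bag t ∧ (v ∈ X ∨ v ∈ C)) ∨ (v ∈ X ∧ t ∈ Q v) := by
    intro t v; simp [W]
  have hcard : ∀ t, (W t).card ≤ (D.bag t).card := by
    intro t
    have hex : ∀ x, ∃ y, x ∈ X → t ∈ Q x → x ∉ D.bag t →
        y ∈ D.bag t ∧ y ∈ P x ∧ y ∉ X ∧ y ∉ C := by
      intro x
      by_cases h : x ∈ X ∧ t ∈ Q x ∧ x ∉ D.bag t
      · obtain ⟨hx, htQ, hxt⟩ := h
        obtain ⟨p1, p2, b, hb, p3⟩ := hP2 x hx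
        obtain ⟨y, hy, hyP⟩ := hsep x t htQ (P x) (p1.mono (res_le _ _)) p2 ⟨b, hb, p3⟩
        refine ⟨y, fun _ _ _ => ⟨hy, hyP, ?_, hPC x hx y hyP⟩⟩
        intro hyX
        have := hP1 x hx y hyX y hyP (hP2 y hyX).2.1
        subst this
        exact hxt hy
      · exact ⟨x, fun h1 h2 h3 => (h ⟨h1, h2, h3⟩).elim⟩
    choose f hf using hex
    have hfW : ∀ v ∈ W t, v ∉ D.bag t → v ∈ X ∧ t ∈ Q v := by
      intro v hv hvt
      rcases (hW t v).1 hv with h | h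
      · exact (hvt h.1).elim
      · exact h
    refine Finset.card_le_card_of_injOn (fun v => if v ∈ D.bag t then v else f v) ?_ ?_
    · intro v hv
      by_cases h : v ∈ D.bag t
      · simpa [h] using h
      · obtain ⟨h1, h2⟩ := hfW v hv h
        simpa [h] using (hf v h1 h2 h).1
    · intro v hv w hw hvw
      by_cases h : v ∈ D.bag t <;> by_cases h' : w ∈ D.bag t <;> simp only [h, h', if_true, if_false] at hvw
      · exact hvw
      · obtain ⟨h1, h2⟩ := hfW w hw h'
        have := hf w h1 h2 h'
        rw [← hvw] at this
        rcases (hW t v).1 hv with h3 | h3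
        · rcases h3.2 with h4 | h4
          · exact (this.2.2.1 h4).elim
          · exact (this.2.2.2 h4).elim
        · exact (this.2.2.1 h3.1).elim
      · obtain ⟨h1, h2⟩ := hfW v hv h
        have := hf v h1 h2 h
        rw [hvw] at this
        rcases (hW t w).1 hw with h3 | h3
        · rcases h3.2 with h4 | h4
          · exact (this.2.2.1 h4).elim
          · exact (this.2.2.2 h4).elim
        · exact (this.2.2.1 h3.1).elim
      · obtain ⟨h1, h2⟩ := hfW v hv h
        obtain ⟨h1', h2'⟩ := hfW w hw h'
        have a1 := hf v h1 h2 h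
        have a2 := hf w h1' h2' h'
        rw [← hvw] at a2
        exact hP1 v h1 w h1' _ a1.2.1 a2.2.1
  refine ⟨D.ι, D.fint, D.tree, W, s, D.isTree, ?_, ?_, ?_, ?_, ?_⟩
  · ext v
    rw [Finset.mem_coe, Finset.mem_coe, hW]
    constructor
    · rintro (⟨h1, h2 | h2⟩ | ⟨h, _⟩)
      · exact h2
      · exact (hsC v h1 h2).elim
      · exact h
    · exact fun h => Or.inr ⟨h, hQ2 v⟩
  · intro t
    by_cases hWt : (W t).card ≤ k
    · exact Or.inl hWt
    right
    rcases hD t with h | ⟨B, hB, h⟩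
    · exact (hWt ((hcard t).trans h)).elim
    · rcases hB with rfl | hB
      · exfalso
        apply hWt
        refine (Finset.card_le_card ?_).trans hX
        intro v hv
        rcases (hW t v).1 hv with ⟨h1, h2 | h2⟩ | h1
        · exact h2
        · exact (h v h1 h2).elim
        · exact h1.1
      · refine ⟨B, hB, fun v hv hvB => ?_⟩
        rcases (hW t v).1 hv with h1 | h1
        · exact h v h1.1 hvB
        · obtain ⟨z, hz, hzB⟩ := hsep v t h1.2 B (h𝓑.cn hB) hvB (hs1 B hB)
          exact h z hz hzB
  · intro t v hv
    rcases (hW t v).1 hv with h1 | h1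
    · exact h1.2
    · exact Or.inl h1.1
  · intro v hv w hw hvw
    obtain ⟨t, h1, h2⟩ := D.edge_mem hvw
    exact ⟨t, (hW t v).2 (Or.inl ⟨h1, hv⟩), (hW t w).2 (Or.inl ⟨h2, hw⟩)⟩
  · intro v hv
    have hsup : Cn D.tree {t | v ∈ D.bag t} := D.support_conn v
    by_cases hvX : v ∈ X
    · have : {t | v ∈ W t} = {t | v ∈ D.bag t} ∪ Q v := by
        ext t
        rw [Set.mem_ofPred_eq, hW]
        constructor
        · rintro (h | h)
          · exact Or.inl h.1
          · exact Or.inr h.2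
        · rintro (h | h)
          · exact Or.inl ⟨h, hv⟩
          · exact Or.inr ⟨hvX, h⟩
      rw [this]
      exact hsup.union (hQ1 v) (htt' v) (hQ3 v)
    · have : {t | v ∈ W t} = {t | v ∈ D.bag t} := by
        ext t
        rw [Set.mem_ofPred_eq, hW]
        constructor
        · rintro (h | h)
          · exact h.1
          · exact (hvX h.1).elim
        · exact fun h => Or.inl ⟨h, hv⟩
      rw [this]
      exact hsup

theorem duality [Finite V] (G : SimpleGraph V) (k : ℕ)
    (hk : ∀ 𝓑, Bramble G 𝓑 → ∃ Z : Set V, Z.ncard ≤ k ∧ ∀ B ∈ 𝓑, ∃ z ∈ Z, z ∈ B)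
    (𝓑 : Set (Set V)) : Bramble G 𝓑 → ∃ D : TreeDecomp G, ∀ t, Adm k 𝓑 (D.bag t) := by
  classical
  induction 𝓑 using WellFoundedGT.induction with
  | ind 𝓑 ih =>
  intro h𝓑
  by_contra hno
  -- a minimum cover
  obtain ⟨Z0, hZ0k, hZ0⟩ := hk 𝓑 h𝓑
  have hex : ∃ n, ∃ Z : Set V, Z.ncard = n ∧ ∀ B ∈ 𝓑, ∃ z ∈ Z, z ∈ B := ⟨_, Z0, rfl, hZ0⟩
  obtain ⟨Z, hZn, hZc⟩ := Nat.find_spec hex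
  have hZmin : ∀ Z' : Set V, (∀ B ∈ 𝓑, ∃ z ∈ Z', z ∈ B) → Z.ncard ≤ Z'.ncard := by
    intro Z' h
    rw [hZn]
    exact Nat.find_min' hex ⟨Z', rfl, h⟩
  obtain ⟨X, rfl⟩ : ∃ X : Finset V, (X : Set V) = Z := ⟨(Set.toFinite Z).toFinset, by simp⟩
  rw [Set.ncard_coe_finset] at hZmin
  have hXk : X.card ≤ k := (hZmin Z0 hZ0).trans hZ0k
  have := glue_all (G := G) (q := Adm k 𝓑) (X := X) (Or.inl hXk) (by
    intro c hc
    by_cases h : ∀ B ∈ 𝓑, Cn G (rch G X c ∪ B)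
    swap
    · push Not at h
      obtain ⟨B, hB, hn⟩ := h
      exact case_one h𝓑 hXk hc hB hn
    have hCn : rch G X c ∉ 𝓑 := by
      intro hC
      obtain ⟨z, hz, hzC⟩ := hZc _ hC
      exact rch_avoid hzC hz
    have hbr : Bramble G (insert (rch G X c) 𝓑) := by
      rintro B (rfl | hB) B' (rfl | hB')
      · rw [Set.union_self]; exact rch_cn hc
      · exact h B' hB'
      · rw [Set.union_comm]; exact h B hB
      · exact h𝓑 B hB B' hB'
    obtain ⟨D, hD⟩ := ih _ (Set.ssubset_insert hCn) hbr
    have : ∃ s, ¬ Adm k 𝓑 (D.bag s) := by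
      by_contra hall
      push Not at hall
      exact hno ⟨D, hall⟩
    obtain ⟨s, hs⟩ := this
    exact case_two h𝓑 hXk hZc hZmin hc D hD hs)
  obtain ⟨ι, fι, T, bag, s, hT, _, hq, _, hed, hcn⟩ := this
  exact hno ⟨⟨ι, fι, ⟨s⟩, T, hT, bag, fun v w h => hed v trivial w trivial h,
    fun v => hcn v trivial⟩, hq⟩

def nb (G : SimpleGraph V) (C : Set V) : Set V := {v | v ∉ C ∧ ∃ c ∈ C, G.Adj c v}

def Big (G : SimpleGraph V) (𝓑 : Set (Set V)) (C : Set V) : Prop :=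
  Cn G C ∧ ∃ B ∈ 𝓑, B ⊆ C

structure St {W : Type*} (H : SimpleGraph W) (G : SimpleGraph V) (𝓑 : Set (Set V)) (U : Finset W)
    (C : Set V) (root : W → V) (M : W → Set V) : Prop where
  big : Big G 𝓑 C
  mem : ∀ u ∈ U, root u ∈ M u
  mcn : ∀ u ∈ U, Cn G (M u)
  mdis : ∀ u ∈ U, ∀ x ∈ M u, x ∉ C
  disj : ∀ u ∈ U, ∀ u' ∈ U, ∀ x, x ∈ M u → x ∈ M u' → u = u'
  edge : ∀ u ∈ U, ∀ u' ∈ U, H.Adj u u' → ∃ x ∈ M u, ∃ x' ∈ M u', G.Adj x x'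
  nbC : nb G C = root '' (U : Set W)
  min : ∀ C', C' ⊆ C → Big G 𝓑 C' → U.card ≤ (nb G C').ncard

theorem St.inj {W : Type*} {H : SimpleGraph W} {G : SimpleGraph V} {𝓑 : Set (Set V)} {U : Finset W}
    {C : Set V} {root : W → V} {M : W → Set V} (h : St H G 𝓑 U C root M) :
    Set.InjOn root (U : Set W) := by
  intro u hu u' hu' e
  exact h.disj u hu u' hu' (root u) (h.mem u hu) (e ▸ h.mem u' hu')

theorem St.card {W : Type*} {H : SimpleGraph W} {G : SimpleGraph V} {𝓑 : Set (Set V)} {U : Finset W}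
    {C : Set V} {root : W → V} {M : W → Set V} (h : St H G 𝓑 U C root M) :
    (nb G C).ncard = U.card := by
  rw [h.nbC, Set.ncard_image_of_injOn h.inj, Set.ncard_coe_finset]

theorem St.push [Finite V] {W : Type*} {H : SimpleGraph W} {G : SimpleGraph V} {𝓑 : Set (Set V)}
    {U : Finset W} {C : Set V} {root : W → V} {M : W → Set V} (h : St H G 𝓑 U C root M)
    {C' : Set V} (hC' : C' ⊆ C) (hb : Big G 𝓑 C') (hn : (nb G C').ncard = U.card) :
    ∃ root' M', St H G 𝓑 U C' root' M' := by
  classical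
  have hX' : ∀ v ∈ nb G C', v ∈ (C ∪ nb G C) \ C' := by
    rintro v ⟨h1, c, hc, hcv⟩
    refine ⟨?_, h1⟩
    by_cases hv : v ∈ C
    · exact Or.inl hv
    · exact Or.inr ⟨hv, c, hC' hc, hcv⟩
  obtain ⟨P, hP1, hP2⟩ := (menger (res G ((C ∪ nb G C) \ C')) (nb G C) (nb G C') U.card (by
    intro Z hZ
    by_contra hlt
    push Not at hlt
    obtain ⟨c, hc⟩ := hb.1.nonempty
    have hav : ∀ z ∈ C', z ∉ (Z \ C') ∪ Cᶜ := by
      rintro z hz (h1 | h1)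
      · exact h1.2 hz
      · exact h1 (hC' hz)
    have hsub : C' ⊆ rch G ((Z \ C') ∪ Cᶜ) c := sub_rch hb.1 hc hav
    have hin : rch G ((Z \ C') ∪ Cᶜ) c ⊆ C := by
      intro z hz
      by_contra hzC
      exact rch_avoid hz (Or.inr hzC)
    have hbig : Big G 𝓑 (rch G ((Z \ C') ∪ Cᶜ) c) := by
      obtain ⟨B, hB, hBC⟩ := hb.2
      exact ⟨rch_cn (hav c hc), B, hB, hBC.trans hsub⟩
    have hnb : nb G (rch G ((Z \ C') ∪ Cᶜ) c) ⊆ Z := by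
      rintro v ⟨hv, u, hu, huv⟩
      by_contra hvZ
      have hvC : v ∉ C := by
        intro hvC
        apply hv
        refine rch_closed hu ?_ huv
        rintro (h1 | h1)
        · exact hvZ h1.1
        · exact h1 hvC
      have hvX : v ∈ nb G C := ⟨hvC, u, hin hu, huv⟩
      have hvD : v ∈ (C ∪ nb G C) \ C' := ⟨Or.inr hvX, fun h => hvC (hC' h)⟩
      have hRD : rch (res G ((C ∪ nb G C) \ C')) Z v ⊆ (C ∪ nb G C) \ C' := rch_res_sub hvD
      have hRX : ∀ w ∈ rch (res G ((C ∪ nb G C) \ C')) Z v, w ∉ nb G C' := by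
        intro w hw hw'
        obtain ⟨z, hz1, hz2⟩ := hZ _ (rch_cn hvZ) ⟨v, hvX, rch_self hvZ⟩ ⟨w, hw', hw⟩
        exact rch_avoid hz2 hz1
      have hstep : ∀ w ∈ rch (res G ((C ∪ nb G C) \ C')) Z v,
          ∀ w' ∈ rch G ((Z \ C') ∪ Cᶜ) c, G.Adj w w' →
          w' ∈ rch (res G ((C ∪ nb G C) \ C')) Z v := by
        intro w hw w' hw' hww
        have hw'C : w' ∉ C' := fun h1 => hRX w hw ⟨(hRD hw).2, w', h1, hww.symm⟩
        refine rch_closed hw (fun h1 => rch_avoid hw' (Or.inl ⟨h1, hw'C⟩))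
          ⟨hww, hRD hw, Or.inl (hin hw'), hw'C⟩
      have hu2 := hstep v (rch_self hvZ) u hu huv.symm
      have hall := (rch_cn (hav c hc)).closed hu hu2 (fun w _ hw w' hw' hww => hstep w hw w' hw' hww)
      exact (hRD (hall (hsub hc))).2 hc
    have h1 := h.min _ hin hbig
    have h2 := Set.ncard_le_ncard hnb
    omega)).index h.card
  have hroot : ∀ u ∈ U, root u ∈ nb G C := by
    intro u hu
    rw [h.nbC]
    exact ⟨u, hu, rfl⟩
  have hPD : ∀ x ∈ nb G C, P x ⊆ (C ∪ nb G C) \ C' := by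
    intro x hx
    exact (hP2 x hx).1.res_sub (hP2 x hx).2.1 ⟨Or.inr hx, fun h1 => hx.1 (hC' h1)⟩
  have hr : ∀ x, ∃ r, x ∈ nb G C → r ∈ nb G C' ∧ r ∈ P x := by
    intro x
    by_cases hx : x ∈ nb G C
    · obtain ⟨r, h1, h2⟩ := (hP2 x hx).2.2
      exact ⟨r, fun _ => ⟨h1, h2⟩⟩
    · exact ⟨x, fun h1 => (hx h1).elim⟩
  choose r hr using hr
  have hMP : ∀ u ∈ U, ∀ u' ∈ U, ∀ x, x ∈ M u → x ∈ P (root u') → u = u' := by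
    intro u hu u' hu' x hx hx'
    rcases (hPD _ (hroot u' hu') hx').1 with h1 | h1
    · exact (h.mdis u hu x hx h1).elim
    · have h2 := h1
      rw [h.nbC] at h2
      obtain ⟨u2, hu2, rfl⟩ := h2
      have e1 := h.disj u hu u2 hu2 _ hx (h.mem u2 hu2)
      have e2 := hP1 _ h1 _ (hroot u' hu') _ (hP2 _ h1).2.1 hx'
      rw [e1]
      exact h.inj hu2 hu' e2
  have hdisj : ∀ u ∈ U, ∀ u' ∈ U, ∀ x, x ∈ M u ∪ P (root u) → x ∈ M u' ∪ P (root u') → u = u' := by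
    rintro u hu u' hu' x (h1 | h1) (h2 | h2)
    · exact h.disj u hu u' hu' x h1 h2
    · exact hMP u hu u' hu' x h1 h2
    · exact (hMP u' hu' u hu x h2 h1).symm
    · exact h.inj hu hu' (hP1 _ (hroot u hu) _ (hroot u' hu') x h1 h2)
  have hmem : ∀ u ∈ U, r (root u) ∈ M u ∪ P (root u) := fun u hu => Or.inr (hr _ (hroot u hu)).2
  refine ⟨fun u => r (root u), fun u => M u ∪ P (root u), hb, hmem, ?_, ?_, hdisj, ?_, ?_, ?_⟩
  · intro u hu
    exact (h.mcn u hu).union ((hP2 _ (hroot u hu)).1.mono (res_le _ _)) (h.mem u hu)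
      (hP2 _ (hroot u hu)).2.1
  · rintro u hu x (hx | hx) hxC
    · exact h.mdis u hu x hx (hC' hxC)
    · exact (hPD _ (hroot u hu) hx).2 hxC
  · intro u hu u' hu' huu
    obtain ⟨x, hx, x', hx', hxx⟩ := h.edge u hu u' hu' huu
    exact ⟨x, Or.inl hx, x', Or.inl hx', hxx⟩
  · symm
    apply Set.eq_of_subset_of_ncard_le
    · rintro _ ⟨u, hu, rfl⟩
      exact (hr _ (hroot u hu)).1
    · rw [hn, Set.ncard_image_of_injOn, Set.ncard_coe_finset]
      intro u hu u' hu' e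
      refine hdisj u hu u' hu' (r (root u)) (hmem u hu) ?_
      have e' : r (root u) = r (root u') := e
      rw [e']
      exact hmem u' hu'
    · exact Set.toFinite _
  · intro C2 hC2 hb2
    exact h.min C2 (hC2.trans hC') hb2

theorem Big.absorb {G : SimpleGraph V} {𝓑 : Set (Set V)} (h𝓑 : Bramble G 𝓑) {C : Set V}
    (hC : Big G 𝓑 C) {B : Set V} (hB : B ∈ 𝓑) (hav : ∀ z ∈ nb G C, z ∉ B) : B ⊆ C := by
  obtain ⟨B0, hB0, hBC⟩ := hC.2
  obtain ⟨b, hb⟩ := (h𝓑.cn hB0).nonempty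
  refine Set.subset_union_left.trans ((h𝓑 B hB B0 hB0).closed (Or.inr hb) (hBC hb) ?_)
  rintro u _ hu v (hv | hv) huv
  · by_contra hvC
    exact hav v ⟨hvC, u, hu, huv⟩ hv
  · exact hBC hv

theorem St.step [Finite V] {W : Type*} [DecidableEq W] {H : SimpleGraph W} {G : SimpleGraph V}
    {𝓑 : Set (Set V)} {k : ℕ} (h𝓑 : Bramble G 𝓑)
    (hord : ∀ Z : Set V, Z.ncard ≤ k → ∃ B ∈ 𝓑, ∀ z ∈ Z, z ∉ B)
    {U : Finset W} (hU : U.card < k) {u : W} (hu : u ∉ U)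
    (hone : ∀ q ∈ U, ∀ q' ∈ U, H.Adj u q → H.Adj u q' → q = q') :
    ∀ (n : ℕ) (C : Set V) (root : W → V) (M : W → Set V), C.ncard = n → St H G 𝓑 U C root M →
      ∃ C root M, St H G 𝓑 (insert u U) C root M := by
  intro n
  induction n using Nat.strong_induction_on with
  | _ n ih =>
  intro C root M hCn h
  have hroot : ∀ u ∈ U, root u ∈ nb G C := by
    intro u hu
    rw [h.nbC]
    exact ⟨u, hu, rfl⟩
  have hy : ∃ y ∈ C, ∀ q ∈ U, H.Adj u q → G.Adj y (root q) := by
    by_cases hq : ∃ q ∈ U, H.Adj u q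
    · obtain ⟨q, hq, huq⟩ := hq
      obtain ⟨_, y, hy, hyq⟩ := hroot q hq
      refine ⟨y, hy, fun q' hq' huq' => ?_⟩
      rw [hone q' hq' q hq huq' huq]
      exact hyq
    · push Not at hq
      obtain ⟨y, hy⟩ := h.big.1.nonempty
      exact ⟨y, hy, fun q h1 h2 => (hq q h1 h2).elim⟩
  obtain ⟨y, hyC, hyadj⟩ := hy
  by_cases hm : ∀ C', C' ⊆ C → y ∉ C' → Big G 𝓑 C' → U.card + 1 ≤ (nb G C').ncard
  swap
  · push Not at hm
    obtain ⟨C', hC', hyC', hb, hlt⟩ := hm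
    have h1 := h.min C' hC' hb
    obtain ⟨root', M', h'⟩ := h.push hC' hb (by omega)
    refine ih _ ?_ C' root' M' rfl h'
    rw [← hCn]
    exact Set.ncard_lt_ncard ⟨hC', fun h2 => hyC' (h2 hyC)⟩
  have hins : (insert y (nb G C)).ncard ≤ U.card + 1 := by
    rw [← h.card]
    exact Set.ncard_insert_le _ _
  obtain ⟨B, hB, hBav⟩ := hord (insert y (nb G C)) (by omega)
  have hBC : B ⊆ C := h.big.absorb h𝓑 hB (fun z hz => hBav z (Or.inr hz))
  obtain ⟨b, hbB⟩ := (h𝓑.cn hB).nonempty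
  have hbZ : b ∉ insert y (nb G C) := fun hz => hBav b hz hbB
  set D := rch G (insert y (nb G C)) b with hD
  have hBD : B ⊆ D := sub_rch (h𝓑.cn hB) hbB (fun z hz hz' => hBav z hz' hz)
  have hDC : D ⊆ C := (rch_cn hbZ).closed (rch_self hbZ) (hBC hbB) (by
    intro a _ ha v hv hav
    by_contra hvC
    exact rch_avoid hv (Or.inr ⟨hvC, a, ha, hav⟩))
  have hyD : y ∉ D := fun hz => rch_avoid hz (Or.inl rfl)
  have hDb : Big G 𝓑 D := ⟨rch_cn hbZ, B, hB, hBD⟩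
  have hnb : nb G D = insert y (nb G C) := by
    apply Set.eq_of_subset_of_ncard_le
    · rintro v ⟨hv, a, ha, hav⟩
      by_contra hvZ
      exact hv (rch_closed ha hvZ hav)
    · exact hins.trans (hm D hDC hyD hDb)
    · exact Set.toFinite _
  have hne : ∀ w ∈ U, w ≠ u := fun w hw e => hu (e ▸ hw)
  have hyM : ∀ w ∈ U, y ∉ M w := fun w hw hz => h.mdis w hw y hz hyC
  refine ⟨D, Function.update root u y, Function.update M u {y}, hDb, ?_, ?_, ?_, ?_, ?_, ?_, ?_⟩
  · intro w hw
    rcases Finset.mem_insert.1 hw with rfl | hw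
    · simp
    · simpa [Function.update_of_ne (hne w hw)] using h.mem w hw
  · intro w hw
    rcases Finset.mem_insert.1 hw with rfl | hw
    · simpa using Cn.single G y
    · simpa [Function.update_of_ne (hne w hw)] using h.mcn w hw
  · intro w hw x hx
    rcases Finset.mem_insert.1 hw with rfl | hw
    · rw [Function.update_self] at hx
      rw [Set.mem_singleton_iff.1 hx]
      exact hyD
    · rw [Function.update_of_ne (hne w hw)] at hx
      exact fun hxD => h.mdis w hw x hx (hDC hxD)
  · intro w hw w' hw' x hx hx'
    rcases Finset.mem_insert.1 hw with rfl | hw1 <;> rcases Finset.mem_insert.1 hw' with rfl | hw1'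
    · rfl
    · rw [Function.update_self] at hx
      rw [Function.update_of_ne (hne w' hw1')] at hx'
      rw [Set.mem_singleton_iff.1 hx] at hx'
      exact (hyM w' hw1' hx').elim
    · rw [Function.update_self] at hx'
      rw [Function.update_of_ne (hne w hw1)] at hx
      rw [Set.mem_singleton_iff.1 hx'] at hx
      exact (hyM w hw1 hx).elim
    · rw [Function.update_of_ne (hne w' hw1')] at hx'
      rw [Function.update_of_ne (hne w hw1)] at hx
      exact h.disj w hw1 w' hw1' x hx hx'
  · intro w hw w' hw' hww
    rcases Finset.mem_insert.1 hw with rfl | hw1 <;> rcases Finset.mem_insert.1 hw' with rfl | hw1'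
    · exact (H.loopless.irrefl _ hww).elim
    · rw [Function.update_self, Function.update_of_ne (hne w' hw1')]
      exact ⟨y, rfl, root w', h.mem w' hw1', hyadj w' hw1' hww⟩
    · rw [Function.update_self, Function.update_of_ne (hne w hw1)]
      exact ⟨root w, h.mem w hw1, y, rfl, (hyadj w hw1 hww.symm).symm⟩
    · rw [Function.update_of_ne (hne w' hw1'), Function.update_of_ne (hne w hw1)]
      exact h.edge w hw1 w' hw1' hww
  · rw [hnb, h.nbC, Finset.coe_insert, Set.image_insert_eq, Function.update_self]
    congr 1
    apply Set.image_congr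
    intro w hw
    rw [Function.update_of_ne (hne w hw)]
  · intro C' hC' hb
    rw [Finset.card_insert_of_notMem hu]
    exact hm C' (hC'.trans hDC) (fun hz => hyD (hC' hz)) hb

theorem grow [Finite V] {W : Type*} [Finite W] {H : SimpleGraph W} {G : SimpleGraph V} (v : W)
    {𝓑 : Set (Set V)} {k : ℕ} (h𝓑 : Bramble G 𝓑)
    (hord : ∀ Z : Set V, Z.ncard ≤ k → ∃ B ∈ 𝓑, ∀ z ∈ Z, z ∉ B)
    (hdeg : ∀ U : Finset W, v ∉ U → U.Nonempty →
      ∃ u ∈ U, ∀ q ∈ U, ∀ q' ∈ U, H.Adj u q → H.Adj u q' → q = q') :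
    ∀ (n : ℕ) (U : Finset W), U.card = n → n ≤ k → v ∉ U → ∃ C root M, St H G 𝓑 U C root M := by
  classical
  intro n
  induction n with
  | zero =>
    intro U hU _ _
    rw [Finset.card_eq_zero] at hU
    subst hU
    obtain ⟨B, hB, _⟩ := hord ∅ (by simp)
    obtain ⟨b, hb⟩ := (h𝓑.cn hB).nonempty
    refine ⟨rch G ∅ b, fun _ => b, fun _ => ∅, ⟨rch_cn (by simp), B, hB,
      sub_rch (h𝓑.cn hB) hb (by simp)⟩, by simp, by simp, by simp, by simp, by simp, ?_, by simp⟩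
    ext x
    simp only [Finset.coe_empty, Set.image_empty, Set.mem_empty_iff_false, iff_false]
    rintro ⟨h1, c, hc, hcx⟩
    exact h1 (rch_closed hc (by simp) hcx)
  | succ n ih =>
    intro U hU hnk hv
    obtain ⟨u, hu, hone⟩ := hdeg U hv (Finset.card_pos.1 (by omega))
    have hc : (U.erase u).card = n := by rw [Finset.card_erase_of_mem hu]; omega
    obtain ⟨C, root, M, h⟩ := ih (U.erase u) hc (by omega) (fun h => hv (Finset.mem_of_mem_erase h))
    have := St.step h𝓑 hord (U := U.erase u) (by omega) (Finset.notMem_erase u U)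
      (fun q hq q' hq' => hone q (Finset.mem_of_mem_erase hq) q' (Finset.mem_of_mem_erase hq'))
      _ C root M rfl h
    rwa [Finset.insert_erase hu] at this

theorem main_deg [Fintype V] {W : Type*} [Fintype W] (H : SimpleGraph W) (G : SimpleGraph V) (v : W)
    (hW : 2 ≤ Fintype.card W)
    (hdeg : ∀ U : Finset W, v ∉ U → U.Nonempty →
      ∃ u ∈ U, ∀ q ∈ U, ∀ q' ∈ U, H.Adj u q → H.Adj u q' → q = q')
    (hno : ¬ IsMinor H G) : treewidth G ≤ Fintype.card W - 2 := by
  classical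
  by_cases hk : ∀ 𝓑, Bramble G 𝓑 →
      ∃ Z : Set V, Z.ncard ≤ Fintype.card W - 1 ∧ ∀ B ∈ 𝓑, ∃ z ∈ Z, z ∈ B
  · obtain ⟨D, hD⟩ := duality G _ hk ∅ (fun B hB => hB.elim)
    apply Nat.sInf_le
    refine ⟨D, fun t => ?_⟩
    rcases hD t with h | ⟨B, hB, _⟩
    · omega
    · exact hB.elim
  push Not at hk
  obtain ⟨𝓑, h𝓑, hord⟩ := hk
  exfalso
  apply hno
  obtain ⟨C, root, M, h⟩ := grow (H := H) v h𝓑 hord hdeg _ (Finset.univ.erase v) rfl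
    (by rw [Finset.card_erase_of_mem (Finset.mem_univ v), Finset.card_univ]) (Finset.notMem_erase _ _)
  have hm : ∀ w, w ≠ v → w ∈ Finset.univ.erase v := fun w hw => by simp [hw]
  have hroot : ∀ w, w ≠ v → ∃ c ∈ C, G.Adj c (root w) := by
    intro w hw
    have : root w ∈ nb G C := by
      rw [h.nbC]
      exact ⟨w, hm w hw, rfl⟩
    exact this.2
  have hcn : ∀ w, Cn G (if w = v then C else M w) := by
    intro w
    by_cases e : w = v
    · rw [if_pos e]; exact h.big.1
    · rw [if_neg e]; exact h.mcn w (hm w e)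
  refine ⟨fun w => if w = v then C else M w, fun w => (hcn w).nonempty, ?_, hcn, ?_⟩
  · intro w w' hne
    rw [Set.disjoint_left]
    intro x hx hx'
    by_cases e : w = v <;> by_cases e' : w' = v <;> simp only [e, e', if_true, if_false] at hx hx'
    · exact hne (e.trans e'.symm)
    · exact h.mdis w' (hm w' e') x hx' hx
    · exact h.mdis w (hm w e) x hx hx'
    · exact hne (h.disj w (hm w e) w' (hm w' e') x hx hx')
  · intro w w' hww
    by_cases e : w = v <;> by_cases e' : w' = v <;> simp only [e, e', if_true, if_false]
    · exact (H.loopless.irrefl v (by rw [e, e'] at hww; exact hww)).elim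
    · obtain ⟨c, hc, hcw⟩ := hroot w' e'
      exact ⟨c, hc, _, h.mem w' (hm w' e'), hcw⟩
    · obtain ⟨c, hc, hcw⟩ := hroot w e
      exact ⟨_, h.mem w (hm w e), c, hc, hcw.symm⟩
    · exact h.edge w (hm w e) w' (hm w' e') hww

theorem forest_deg {W : Type*} [Finite W] (H : SimpleGraph W) (v : W)
    (hac : (H.induce {w : W | w ≠ v}).IsAcyclic) (U : Finset W) (hv : v ∉ U) (hU : U.Nonempty) :
    ∃ u ∈ U, ∀ q ∈ U, ∀ q' ∈ U, H.Adj u q → H.Adj u q' → q = q' := by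
  have hne : ∀ w ∈ U, w ≠ v := fun w hw e => hv (e ▸ hw)
  let f : H.induce (U : Set W) →g H.induce {w : W | w ≠ v} :=
    ⟨fun x => ⟨x.1, hne x.1 x.2⟩, fun {a b} h => h⟩
  have hK : (H.induce (U : Set W)).IsAcyclic := hac.comap f (by
    intro a b e
    exact Subtype.ext (congrArg (fun z => z.1) e))
  obtain ⟨u0, hu0⟩ := hU
  haveI : Nonempty (U : Set W) := ⟨⟨u0, hu0⟩⟩
  obtain ⟨a, b, p, hp, hmax⟩ :=
    Walk.exists_isPath_forall_isPath_length_le_length (H.induce (U : Set W))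
  have key : ∀ w, (H.induce (U : Set W)).Adj b w → w = p.penultimate := by
    intro w hbw
    apply hK.eq_penultimate_of_adj_end hp hbw
    by_contra hw
    have := hmax _ _ _ (hp.concat hw hbw)
    rw [Walk.length_concat] at this
    omega
  refine ⟨b.1, b.2, fun q hq q' hq' h h' => ?_⟩
  have e1 := key ⟨q, hq⟩ h
  have e2 := key ⟨q', hq'⟩ h'
  exact congrArg (fun z => z.1) (e1.trans e2.symm)

theorem bip_deg (n : ℕ) (U : Finset (Fin 2 ⊕ Fin n)) (hv : Sum.inl 0 ∉ U) (hU : U.Nonempty) :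
    ∃ u ∈ U, ∀ q ∈ U, ∀ q' ∈ U, (completeBipartiteGraph (Fin 2) (Fin n)).Adj u q →
      (completeBipartiteGraph (Fin 2) (Fin n)).Adj u q' → q = q' := by
  have hl : ∀ i : Fin 2, Sum.inl i ∈ U → i = 1 := by
    intro i hi
    by_contra h
    have : i = 0 := by omega
    exact hv (this ▸ hi)
  by_cases hr : ∃ i, Sum.inr i ∈ U
  · obtain ⟨i, hi⟩ := hr
    refine ⟨_, hi, ?_⟩
    rintro (q | q) hq (q' | q') hq' h h'
    · rw [hl q hq, hl q' hq']
    · simp at h'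
    · simp at h
    · simp at h
  · push Not at hr
    obtain ⟨u, hu⟩ := hU
    refine ⟨u, hu, ?_⟩
    rintro (q | q) hq (q' | q') hq' h h'
    · rw [hl q hq, hl q' hq']
    · exact (hr _ hq').elim
    · exact (hr _ hq).elim
    · exact (hr _ hq).elim

end AF

/-- For any apex-forest `H` (a graph with a vertex whose deletion leaves a forest) with
`|V(H)| ≥ 2`, every `H`-minor-free graph has treewidth at most `|V(H)| − 2`. In
particular, every `K_{2,n}`-minor-free graph has treewidth at most `n`. -/
theorem apex_forest_minor_free_treewidth {V : Type*} [Fintype V] (G : SimpleGraph V) :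
    (∀ (W : Type) [Fintype W] (H : SimpleGraph W), 2 ≤ Fintype.card W →
      (∃ v : W, (H.induce {w : W | w ≠ v}).IsAcyclic) →
      ¬ IsMinor H G → treewidth G ≤ Fintype.card W - 2) ∧
    (∀ n : ℕ, ¬ IsMinor (completeBipartiteGraph (Fin 2) (Fin n)) G →
      treewidth G ≤ n) := by
  refine ⟨?_, ?_⟩
  · rintro W _ H hW ⟨v, hac⟩ hno
    exact AF.main_deg H G v hW (AF.forest_deg H v hac) hno
  · intro n hno
    have h := AF.main_deg _ G (Sum.inl 0) (by simp) (AF.bip_deg n) hno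
    simpa using h
end
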